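/- arXiv:1302.2638 — 2 statements merged into one kernel-verified Lean document; each statement's English description precedes it below -/
import Mathlib

section
/- Let β > 0, let N be a positive integer, let a > −1 and b > −1 be real, and let 0 ≤ l ≤ N. Then the Jacobi β-ensemble average of the l-th elementary symmetric polynomial is ⟨e_l⟩ = C(N,l) · ∏_{j=1}^{l} (a + 1 + (N−j)β/2)/(a + b + 2 + (2N−j−1)β/2), where C(N,l) is the binomial coefficient. Explicitly: ∫_{[0,1]^N} e_l(x) ∏_{i=1}^N x_i^a (1−x_i)^b ∏_{1≤j<k≤N} |x_k−x_j|^β dx divided by ∫_{[0,1]^N} ∏_{i=1}^N x_i^a (1−x_i)^b ∏_{1≤j<k≤N} |x_k−x_j|^β dx equals C(N,l) ∏_{j=1}^{l} (a+1+(N−j)β/2)/(a+b+2+(2N−j−1)β/2). -/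
open MeasureTheory

/-- The `l`-th elementary symmetric polynomial in `N` variables. -/
noncomputable def esym (N l : ℕ) (x : Fin N → ℝ) : ℝ :=
  ∑ S ∈ Finset.powersetCard l (Finset.univ : Finset (Fin N)), ∏ i ∈ S, x i

/-- The `β`-fold interaction term `∏_{j < k} |x_k - x_j|^β`. -/
noncomputable def interaction (N : ℕ) (β : ℝ) (x : Fin N → ℝ) : ℝ :=
  ∏ p ∈ Finset.univ.filter (fun p : Fin N × Fin N => p.1 < p.2), |x p.2 - x p.1| ^ β

/-- The unnormalised density of the Jacobi `β`-ensemble. -/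
noncomputable def jacobiDensity (N : ℕ) (β a b : ℝ) (x : Fin N → ℝ) : ℝ :=
  (∏ i, x i ^ a * (1 - x i) ^ b) * interaction N β x

/-- Lebesgue measure on the unit cube, as a product measure. -/
noncomputable def cubeMeasure (N : ℕ) : Measure (Fin N → ℝ) :=
  Measure.pi fun _ => volume.restrict (Set.Icc (0 : ℝ) 1)

theorem volume_restrict_cube (N : ℕ) :
    (volume : Measure (Fin N → ℝ)).restrict (Set.univ.pi fun _ => Set.Icc (0 : ℝ) 1) =
      cubeMeasure N := by
  rw [volume_pi, Measure.restrict_pi_pi]; rfl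

theorem ae_mem_Ioo : ∀ᵐ t ∂(volume.restrict (Set.Icc (0 : ℝ) 1)), t ∈ Set.Ioo (0 : ℝ) 1 := by
  rw [← restrict_Ioo_eq_restrict_Icc]
  exact ae_restrict_mem measurableSet_Ioo

theorem ae_cubeMeasure_mem_Ioo (N : ℕ) :
    ∀ᵐ x ∂(cubeMeasure N), ∀ i, x i ∈ Set.Ioo (0 : ℝ) 1 := by
  rw [ae_all_iff]
  intro i
  exact (Measure.tendsto_eval_ae_ae (i := i)).eventually ae_mem_Ioo

theorem measurePreserving_comp_perm {N : ℕ} (σ : Equiv.Perm (Fin N)) :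
    MeasurePreserving (MeasurableEquiv.piCongrLeft (fun _ : Fin N => ℝ) σ.symm)
      (cubeMeasure N) (cubeMeasure N) :=
  measurePreserving_piCongrLeft (fun _ : Fin N => volume.restrict (Set.Icc (0 : ℝ) 1)) σ.symm

theorem piCongrLeft_symm_eq_comp {N : ℕ} (σ : Equiv.Perm (Fin N)) (x : Fin N → ℝ) :
    MeasurableEquiv.piCongrLeft (fun _ : Fin N => ℝ) σ.symm x = fun i => x (σ i) := by
  ext i
  have := MeasurableEquiv.piCongrLeft_apply_apply (β := fun _ : Fin N => ℝ) σ.symm x (σ i)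
  simpa using this

theorem integral_comp_perm {N : ℕ} (σ : Equiv.Perm (Fin N)) (f : (Fin N → ℝ) → ℝ) :
    ∫ x, f (fun i => x (σ i)) ∂(cubeMeasure N) = ∫ x, f x ∂(cubeMeasure N) := by
  rw [← (measurePreserving_comp_perm σ).integral_comp' f]
  simp only [piCongrLeft_symm_eq_comp]

theorem interaction_eq_abs_det (N : ℕ) (β : ℝ) (x : Fin N → ℝ) :
    interaction N β x = |(Matrix.vandermonde x).det| ^ β := by
  rw [Matrix.det_vandermonde, interaction, Real.finsetProd_rpow _ _ (fun _ _ => abs_nonneg _),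
    ← Finset.abs_prod, Finset.prod_filter, ← Finset.univ_product_univ, Finset.prod_product]
  congr 2
  refine Finset.prod_congr rfl fun i _ => ?_
  rw [← Finset.prod_filter]
  refine Finset.prod_congr ?_ fun _ _ => rfl
  ext; simp

theorem interaction_comp_perm {N : ℕ} (β : ℝ) (σ : Equiv.Perm (Fin N)) (x : Fin N → ℝ) :
    interaction N β (fun i => x (σ i)) = interaction N β x := by
  have h : Matrix.vandermonde (fun i => x (σ i)) = (Matrix.vandermonde x).submatrix σ id := rfl
  rw [interaction_eq_abs_det, interaction_eq_abs_det, h, Matrix.det_permute, abs_mul]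
  rcases Int.units_eq_one_or (Equiv.Perm.sign σ) with h | h <;> simp [h]

theorem interaction_nonneg (N : ℕ) (β : ℝ) (x : Fin N → ℝ) : 0 ≤ interaction N β x :=
  Finset.prod_nonneg fun _ _ => Real.rpow_nonneg (abs_nonneg _) _

theorem abs_sub_le_one_of_mem_Ioo {s t : ℝ} (hs : s ∈ Set.Ioo (0 : ℝ) 1)
    (ht : t ∈ Set.Ioo (0 : ℝ) 1) : |s - t| ≤ 1 := by
  rw [abs_le]; constructor <;> linarith [hs.1, hs.2, ht.1, ht.2]

theorem interaction_le_one {N : ℕ} {β : ℝ} (hβ : 0 < β) {x : Fin N → ℝ}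
    (hx : ∀ i, x i ∈ Set.Ioo (0 : ℝ) 1) : interaction N β x ≤ 1 :=
  Finset.prod_le_one (fun _ _ => Real.rpow_nonneg (abs_nonneg _) _) fun _ _ =>
    Real.rpow_le_one (abs_nonneg _) (abs_sub_le_one_of_mem_Ioo (hx _) (hx _)) hβ.le

theorem interaction_eq_zero {N : ℕ} {β : ℝ} (hβ : 0 < β) {x : Fin N → ℝ} {i j : Fin N}
    (hij : i ≠ j) (h : x i = x j) : interaction N β x = 0 := by
  rw [interaction_eq_abs_det, Matrix.det_vandermonde_eq_zero_iff.mpr ⟨i, j, h, hij⟩, abs_zero,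
    Real.zero_rpow hβ.ne']

theorem interaction_succ (n : ℕ) (β : ℝ) (x : Fin (n + 1) → ℝ) :
    interaction (n + 1) β x =
      (∏ j : Fin n, |x j.succ - x 0| ^ β) * interaction n β (fun j => x j.succ) := by
  rw [interaction_eq_abs_det, interaction_eq_abs_det, Matrix.det_vandermonde,
    Matrix.det_vandermonde, Fin.prod_univ_succ, abs_mul,
    Real.mul_rpow (abs_nonneg _) (abs_nonneg _), Fin.prod_Ioi_zero, Finset.abs_prod,
    ← Real.finsetProd_rpow _ _ (fun _ _ => abs_nonneg _)]
  simp only [Fin.prod_Ioi_succ]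

@[fun_prop]
theorem measurable_interaction (N : ℕ) (β : ℝ) : Measurable (interaction N β) := by
  unfold interaction; fun_prop

@[fun_prop]
theorem measurable_jacobiDensity (N : ℕ) (β a b : ℝ) : Measurable (jacobiDensity N β a b) := by
  unfold jacobiDensity; fun_prop

theorem jacobiDensity_comp_perm {N : ℕ} (β a b : ℝ) (σ : Equiv.Perm (Fin N)) (x : Fin N → ℝ) :
    jacobiDensity N β a b (fun i => x (σ i)) = jacobiDensity N β a b x := by
  rw [jacobiDensity, jacobiDensity, interaction_comp_perm,
    Equiv.prod_comp σ fun i => x i ^ a * (1 - x i) ^ b]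

theorem jacobiDensity_succ (n : ℕ) (β a b : ℝ) (x : Fin (n + 1) → ℝ) :
    jacobiDensity (n + 1) β a b x =
      x 0 ^ a * (1 - x 0) ^ b * (∏ j : Fin n, |x j.succ - x 0| ^ β) *
        jacobiDensity n β a b (fun j => x j.succ) := by
  rw [jacobiDensity, jacobiDensity, interaction_succ, Fin.prod_univ_succ]; ring

theorem integrable_rpow_mul_one_sub_rpow {a b : ℝ} (ha : -1 < a) (hb : -1 < b) :
    Integrable (fun t : ℝ => t ^ a * (1 - t) ^ b) (volume.restrict (Set.Icc 0 1)) := by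
  have h := Complex.betaIntegral_convergent (u := ((a + 1 : ℝ) : ℂ)) (v := ((b + 1 : ℝ) : ℂ))
    (by simpa using by linarith) (by simpa using by linarith)
  rw [intervalIntegrable_iff_integrableOn_Ioo_of_le zero_le_one] at h
  rw [← restrict_Ioo_eq_restrict_Icc]
  refine (h.norm).congr ?_
  filter_upwards [ae_restrict_mem measurableSet_Ioo] with t ht
  have h1 : (1 : ℂ) - t = ((1 - t : ℝ) : ℂ) := by push_cast; ring
  rw [norm_mul, h1, Complex.norm_cpow_eq_rpow_re_of_pos ht.1,
    Complex.norm_cpow_eq_rpow_re_of_pos (by linarith [ht.2])]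
  simp

theorem integrable_prod_rpow (N : ℕ) {a b : ℝ} (ha : -1 < a) (hb : -1 < b) :
    Integrable (fun x : Fin N → ℝ => ∏ i, x i ^ a * (1 - x i) ^ b) (cubeMeasure N) :=
  Integrable.fintype_prod fun _ => integrable_rpow_mul_one_sub_rpow ha hb

theorem integrable_jacobiDensity (N : ℕ) {β a b : ℝ} (hβ : 0 < β) (ha : -1 < a) (hb : -1 < b) :
    Integrable (jacobiDensity N β a b) (cubeMeasure N) := by
  refine (integrable_prod_rpow N ha hb).mul_bdd (c := 1)
    (measurable_interaction N β).aestronglyMeasurable ?_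
  filter_upwards [ae_cubeMeasure_mem_Ioo N] with x hx
  rw [Real.norm_of_nonneg (interaction_nonneg _ _ _)]
  exact interaction_le_one hβ hx

theorem abs_prod_le_one_of_mem_Ioo {N : ℕ} (T : Finset (Fin N)) {x : Fin N → ℝ}
    (hx : ∀ i, x i ∈ Set.Ioo (0 : ℝ) 1) : |∏ i ∈ T, x i| ≤ 1 := by
  rw [abs_of_nonneg (Finset.prod_nonneg fun i _ => (hx i).1.le)]
  exact Finset.prod_le_one (fun i _ => (hx i).1.le) fun i _ => (hx i).2.le

theorem integrable_prod_mul_jacobiDensity {N : ℕ} (T : Finset (Fin N)) {β a b : ℝ} (hβ : 0 < β)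
    (ha : -1 < a) (hb : -1 < b) :
    Integrable (fun x => (∏ i ∈ T, x i) * jacobiDensity N β a b x) (cubeMeasure N) := by
  refine (integrable_jacobiDensity N hβ ha hb).bdd_mul (c := 1)
    (Measurable.aestronglyMeasurable (by fun_prop)) ?_
  filter_upwards [ae_cubeMeasure_mem_Ioo N] with x hx using abs_prod_le_one_of_mem_Ioo T hx

theorem integral_jacobiDensity_pos (N : ℕ) {β a b : ℝ} (hβ : 0 < β) (ha : -1 < a) (hb : -1 < b) :
    0 < ∫ x, jacobiDensity N β a b x ∂(cubeMeasure N) := by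
  have hnn : 0 ≤ᵐ[cubeMeasure N] jacobiDensity N β a b := by
    filter_upwards [ae_cubeMeasure_mem_Ioo N] with x hx
    refine mul_nonneg (Finset.prod_nonneg fun i _ => ?_) (interaction_nonneg _ _ _)
    exact mul_nonneg (Real.rpow_nonneg (hx i).1.le _)
      (Real.rpow_nonneg (by linarith [(hx i).2]) _)
  rw [integral_pos_iff_support_of_nonneg_ae hnn (integrable_jacobiDensity N hβ ha hb)]
  let U : Set (Fin N → ℝ) :=
    (Set.univ.pi fun _ => Set.Ioo (0 : ℝ) 1) ∩ {x | (Matrix.vandermonde x).det ≠ 0}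
  have hUo : IsOpen U := by
    refine (isOpen_set_pi Set.finite_univ fun _ _ => isOpen_Ioo).inter ?_
    refine isOpen_ne_fun ?_ continuous_const
    simp only [Matrix.det_vandermonde]
    fun_prop
  have hUn : U.Nonempty := by
    refine ⟨fun i => ((i : ℝ) + 1) / (N + 1), fun i _ => ⟨by positivity, ?_⟩, ?_⟩
    · rw [div_lt_one (by positivity)]
      have : (i : ℝ) < N := by exact_mod_cast i.2
      linarith
    · rw [Set.mem_ofPred_eq, Matrix.det_vandermonde_ne_zero_iff]
      intro i j hij
      have hN : (N : ℝ) + 1 ≠ 0 := by positivity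
      field_simp at hij
      exact Fin.ext (by exact_mod_cast add_right_cancel hij)
  have hUs : U ⊆ Function.support (jacobiDensity N β a b) := by
    rintro x ⟨hx, hdet⟩
    have hx : ∀ i, x i ∈ Set.Ioo (0 : ℝ) 1 := fun i => hx i trivial
    refine mul_ne_zero (Finset.prod_ne_zero_iff.mpr fun i _ => mul_ne_zero ?_ ?_) ?_
    · exact (Real.rpow_pos_of_pos (hx i).1 _).ne'
    · exact (Real.rpow_pos_of_pos (by linarith [(hx i).2]) _).ne'
    · rw [interaction_eq_abs_det]
      exact (Real.rpow_pos_of_pos (abs_pos.mpr hdet) _).ne'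
  refine lt_of_lt_of_le ?_ (measure_mono hUs)
  rw [← volume_restrict_cube, Measure.restrict_apply hUo.measurableSet,
    Set.inter_eq_left.mpr (Set.inter_subset_left.trans
      (Set.pi_mono fun _ _ => Set.Ioo_subset_Icc_self))]
  exact hUo.measure_pos _ hUn

theorem integrableOn_abs_rpow {r : ℝ} (hr : -1 < r) :
    IntegrableOn (fun u : ℝ => |u| ^ r) (Set.Icc (-1) 1) := by
  have h1 : IntervalIntegrable (fun u : ℝ => |u| ^ r) volume 0 1 := by
    refine (intervalIntegral.intervalIntegrable_rpow' hr).congr fun u hu => ?_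
    rw [Set.uIoc_of_le zero_le_one] at hu
    simp only [abs_of_pos hu.1]
  have h2 : IntervalIntegrable (fun u : ℝ => |u| ^ r) volume (-1) 0 := by
    have := (IntervalIntegrable.iff_comp_neg (f := fun u : ℝ => |u| ^ r)).mp h1.symm
    simpa using this
  rw [← intervalIntegrable_iff_integrableOn_Icc_of_le (by norm_num)]
  exact h2.trans h1

/-- The kernel `|t - y j| ^ r` with `-1 < r` is integrable against an integrable function of `y`. -/
theorem integrable_abs_sub_rpow_mul {n : ℕ} {r : ℝ} (hr : -1 < r) (j : Fin n)
    {q : (Fin n → ℝ) → ℝ} (hq : Integrable q (cubeMeasure n)) :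
    Integrable (fun p : ℝ × (Fin n → ℝ) => |p.1 - p.2 j| ^ r * q p.2)
      ((volume.restrict (Set.Icc (0 : ℝ) 1)).prod (cubeMeasure n)) := by
  have : SigmaFinite (cubeMeasure n) := by unfold cubeMeasure; infer_instance
  let h : ℝ → ℝ := (Set.Icc (-1) 1).indicator fun u => |u| ^ r
  have hh : Integrable h :=
    (integrable_indicator_iff measurableSet_Icc).mpr (integrableOn_abs_rpow hr)
  have hhm : Measurable h :=
    Measurable.indicator (by fun_prop) measurableSet_Icc
  have hK : Integrable (fun p : ℝ × (Fin n → ℝ) => h (p.1 - p.2 j) * q p.2)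
      (volume.prod (cubeMeasure n)) := by
    rw [integrable_prod_iff']
    · refine ⟨.of_forall fun y => ?_, ?_⟩
      · exact (hh.comp_sub_right (y j)).mul_const (q y)
      · have hI : ∀ y : Fin n → ℝ,
            ∫ t, ‖h (t - y j) * q y‖ = (∫ t, ‖h t‖) * ‖q y‖ := fun y => by
          simp only [norm_mul]
          rw [integral_mul_const, integral_sub_right_eq_self (fun t => ‖h t‖) (y j)]
        simp only [hI]
        exact hq.norm.const_mul _
    · exact (Measurable.aestronglyMeasurable (by fun_prop)).mul
        hq.aestronglyMeasurable.comp_snd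
  have hle : (volume.restrict (Set.Icc (0 : ℝ) 1)).prod (cubeMeasure n) ≤
      volume.prod (cubeMeasure n) := by
    have := Measure.prod_restrict (μ := (volume : Measure ℝ)) (ν := cubeMeasure n)
      (Set.Icc (0 : ℝ) 1) Set.univ
    rw [Measure.restrict_univ] at this
    rw [this]
    exact Measure.restrict_le_self
  refine (hK.mono_measure hle).congr ?_
  have h1 : ∀ᵐ p ∂((volume.restrict (Set.Icc (0 : ℝ) 1)).prod (cubeMeasure n)),
      p.1 ∈ Set.Ioo (0 : ℝ) 1 := Measure.quasiMeasurePreserving_fst.ae ae_mem_Ioo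
  have h2 : ∀ᵐ p ∂((volume.restrict (Set.Icc (0 : ℝ) 1)).prod (cubeMeasure n)),
      ∀ i, p.2 i ∈ Set.Ioo (0 : ℝ) 1 :=
    Measure.quasiMeasurePreserving_snd.ae (ae_cubeMeasure_mem_Ioo n)
  filter_upwards [h1, h2] with p hp1 hp2
  have : p.1 - p.2 j ∈ Set.Icc (-1 : ℝ) 1 := abs_le.mp (abs_sub_le_one_of_mem_Ioo hp1 (hp2 j))
  simp only [h, Set.indicator_of_mem this]

theorem measurePreserving_piFinSucc (n : ℕ) :
    MeasurePreserving (MeasurableEquiv.piFinSuccAbove (fun _ : Fin (n + 1) => ℝ) 0)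
      (cubeMeasure (n + 1)) ((volume.restrict (Set.Icc (0 : ℝ) 1)).prod (cubeMeasure n)) :=
  measurePreserving_piFinSuccAbove (fun _ => volume.restrict (Set.Icc (0 : ℝ) 1)) 0

theorem piFinSuccAbove_zero_apply (n : ℕ) (x : Fin (n + 1) → ℝ) :
    MeasurableEquiv.piFinSuccAbove (fun _ : Fin (n + 1) => ℝ) 0 x =
      (x 0, fun j : Fin n => x j.succ) := by
  rfl

theorem integrable_singular_mul_jacobiDensity {n : ℕ} (T : Finset (Fin (n + 1))) (j : Fin n)
    {β a b : ℝ} (hβ : 0 < β) (ha : -1 < a) (hb : -1 < b) :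
    Integrable (fun x : Fin (n + 1) → ℝ => (∏ i ∈ T, x i) *
      (x 0 * (1 - x 0) / (x 0 - x j.succ)) * jacobiDensity (n + 1) β a b x)
      (cubeMeasure (n + 1)) := by
  have hK := ((measurePreserving_piFinSucc n).integrable_comp_emb
    (MeasurableEquiv.measurableEmbedding _)).mpr
    (integrable_abs_sub_rpow_mul (r := β - 1) (by linarith) j
      (integrable_prod_rpow n ha hb))
  refine hK.mono (Measurable.aestronglyMeasurable (by fun_prop)) ?_
  filter_upwards [ae_cubeMeasure_mem_Ioo (n + 1)] with x hx
  have ht := hx 0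
  have h1t : 0 < 1 - x 0 := by linarith [ht.2]
  set y : Fin n → ℝ := fun j => x j.succ with hy
  have hyI : ∀ i, y i ∈ Set.Ioo (0 : ℝ) 1 := fun i => hx _
  simp only [Function.comp, piFinSuccAbove_zero_apply]
  rw [jacobiDensity_succ, jacobiDensity]
  have hQ : 0 ≤ ∏ i, y i ^ a * (1 - y i) ^ b := Finset.prod_nonneg fun i _ =>
    mul_nonneg (Real.rpow_nonneg (hyI i).1.le _) (Real.rpow_nonneg (by linarith [(hyI i).2]) _)
  have hprod : ∏ i : Fin n, |x i.succ - x 0| ^ β ≤ |x 0 - y j| ^ β := by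
    rw [← Finset.mul_prod_erase _ _ (Finset.mem_univ j), abs_sub_comm]
    refine mul_le_of_le_one_right (Real.rpow_nonneg (abs_nonneg _) _) ?_
    exact Finset.prod_le_one (fun _ _ => Real.rpow_nonneg (abs_nonneg _) _) fun _ _ =>
      Real.rpow_le_one (abs_nonneg _) (abs_sub_le_one_of_mem_Ioo (hx _) (hx _)) hβ.le
  have hprod0 : 0 ≤ ∏ i : Fin n, |x i.succ - x 0| ^ β :=
    Finset.prod_nonneg fun _ _ => Real.rpow_nonneg (abs_nonneg _) _
  have hta : x 0 * x 0 ^ a ≤ 1 := by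
    rw [mul_comm, ← Real.rpow_add_one ht.1.ne']
    exact Real.rpow_le_one ht.1.le ht.2.le (by linarith)
  have htb : (1 - x 0) * (1 - x 0) ^ b ≤ 1 := by
    rw [mul_comm, ← Real.rpow_add_one h1t.ne']
    exact Real.rpow_le_one h1t.le (by linarith [ht.1]) (by linarith)
  have hta0 : 0 ≤ x 0 * x 0 ^ a := mul_nonneg ht.1.le (Real.rpow_nonneg ht.1.le _)
  have htb0 : 0 ≤ (1 - x 0) * (1 - x 0) ^ b := mul_nonneg h1t.le (Real.rpow_nonneg h1t.le _)
  have hsing : (∏ i : Fin n, |x i.succ - x 0| ^ β) / |x 0 - y j| ≤ |x 0 - y j| ^ (β - 1) := by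
    rcases eq_or_ne (x 0 - y j) 0 with h0 | h0
    · simp only [h0, abs_zero, div_zero]
      exact Real.rpow_nonneg le_rfl _
    · rw [Real.rpow_sub_one (abs_pos.mpr h0).ne']
      gcongr
  have hI := interaction_le_one hβ hyI
  have hI0 := interaction_nonneg n β y
  have hT := abs_prod_le_one_of_mem_Ioo T hx
  calc ‖(∏ i ∈ T, x i) * (x 0 * (1 - x 0) / (x 0 - y j)) *
        (x 0 ^ a * (1 - x 0) ^ b * (∏ j : Fin n, |x j.succ - x 0| ^ β) *
          ((∏ i, y i ^ a * (1 - y i) ^ b) * interaction n β y))‖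
      = |∏ i ∈ T, x i| * ((x 0 * x 0 ^ a) * ((1 - x 0) * (1 - x 0) ^ b)) *
          (((∏ i : Fin n, |x i.succ - x 0| ^ β) / |x 0 - y j|) *
            (∏ i, y i ^ a * (1 - y i) ^ b)) * interaction n β y := by
        simp only [norm_mul, norm_div, Real.norm_eq_abs, abs_of_pos ht.1, abs_of_pos h1t,
          abs_of_nonneg hprod0, abs_of_nonneg hQ, abs_of_nonneg hI0,
          abs_of_nonneg (Real.rpow_nonneg ht.1.le a), abs_of_nonneg (Real.rpow_nonneg h1t.le b)]
        ring
    _ ≤ 1 * (1 * 1) * (|x 0 - y j| ^ (β - 1) * (∏ i, y i ^ a * (1 - y i) ^ b)) * 1 := by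
        gcongr
    _ = ‖|x 0 - y j| ^ (β - 1) * ∏ i, y i ^ a * (1 - y i) ^ b‖ := by
        rw [Real.norm_of_nonneg (mul_nonneg (Real.rpow_nonneg (abs_nonneg _) _) hQ)]
        ring

theorem hasDerivAt_abs_sub_rpow (β : ℝ) {c t : ℝ} (h : t ≠ c) :
    HasDerivAt (fun t => |c - t| ^ β) (|c - t| ^ β * (β / (t - c))) t := by
  have hne : c - t ≠ 0 := sub_ne_zero.mpr h.symm
  have hne' : t - c ≠ 0 := sub_ne_zero.mpr h
  have h1 : HasDerivAt (fun t : ℝ => |c - t|) (SignType.sign (c - t) * (-1) : ℝ) t :=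
    (hasDerivAt_abs hne).comp t ((hasDerivAt_id t).const_sub c)
  convert h1.rpow_const (p := β) (Or.inl (abs_ne_zero.mpr hne)) using 1
  rw [Real.rpow_sub_one (abs_ne_zero.mpr hne)]
  rcases lt_or_gt_of_ne hne with h0 | h0
  · rw [abs_of_neg h0, sign_neg h0]
    simp only [SignType.coe_neg_one, neg_sub]
    ring
  · rw [abs_of_pos h0, sign_pos h0]
    simp only [SignType.coe_one]
    field_simp
    ring

theorem hasDerivAt_prod_abs_sub_rpow {ι : Type*} (s : Finset ι) (β : ℝ) (y : ι → ℝ) {t : ℝ}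
    (h : ∀ j ∈ s, t ≠ y j) :
    HasDerivAt (fun t => ∏ j ∈ s, |y j - t| ^ β)
      ((∏ j ∈ s, |y j - t| ^ β) * ∑ j ∈ s, β / (t - y j)) t := by
  classical
  induction s using Finset.induction_on with
  | empty => simpa using hasDerivAt_const t (1 : ℝ)
  | insert j s hj ih =>
    simp only [Finset.prod_insert hj, Finset.sum_insert hj]
    refine ((hasDerivAt_abs_sub_rpow β (h j (Finset.mem_insert_self j s))).mul
      (ih fun i hi => h i (Finset.mem_insert_of_mem hi))).congr_deriv ?_
    ring

/-- The one-variable total derivative behind Aomoto's recursion integrates to zero. -/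
theorem integral_aomoto_eq_zero {n : ℕ} {β a b : ℝ} (hβ : 0 < β) (ha : -1 < a) (hb : -1 < b)
    (y : Fin n → ℝ)
    (hi : Integrable (fun t : ℝ => ((a + 1) - (a + b + 2) * t +
      β * ∑ j, t * (1 - t) / (t - y j)) * (t ^ a * (1 - t) ^ b * ∏ j, |y j - t| ^ β))
      (volume.restrict (Set.Icc (0 : ℝ) 1))) :
    ∫ t in Set.Icc (0 : ℝ) 1, ((a + 1) - (a + b + 2) * t +
      β * ∑ j, t * (1 - t) / (t - y j)) * (t ^ a * (1 - t) ^ b * ∏ j, |y j - t| ^ β) = 0 := by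
  rw [integral_Icc_eq_integral_Ioc, ← intervalIntegral.integral_of_le zero_le_one]
  rw [integral_eq_of_hasDerivAt_off_countable
    (fun t => t ^ (a + 1) * (1 - t) ^ (b + 1) * ∏ j, |y j - t| ^ β) _
    (s := Set.range y) (Set.countable_range y)]
  · simp [Real.zero_rpow (by linarith : a + 1 ≠ 0), Real.zero_rpow (by linarith : b + 1 ≠ 0)]
  · refine Continuous.continuousOn ?_
    refine ((Real.continuous_rpow_const (by linarith)).mul
      ((Real.continuous_rpow_const (by linarith)).comp (continuous_const.sub continuous_id))).mul
      (continuous_finsetProd _ fun j _ => (Real.continuous_rpow_const hβ.le).comp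
        (continuous_const.sub continuous_id).abs)
  · rintro t ⟨ht, hty⟩
    simp only [zero_le_one, inf_of_le_left, sup_of_le_right] at ht
    have h1t : 0 < 1 - t := by linarith [ht.2]
    have hd1 := Real.hasDerivAt_rpow_const (x := t) (p := a + 1) (Or.inl ht.1.ne')
    have hd2 := ((hasDerivAt_id t).const_sub 1).rpow_const (p := b + 1) (Or.inl h1t.ne')
    have hd3 := hasDerivAt_prod_abs_sub_rpow Finset.univ β y (t := t)
      fun j _ h => hty ⟨j, h.symm⟩
    refine ((hd1.mul hd2).mul hd3).congr_deriv ?_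
    simp only [id_eq, add_sub_cancel_right, Pi.mul_apply, Real.rpow_add_one ht.1.ne',
      Real.rpow_add_one h1t.ne', mul_div_assoc, ← Finset.mul_sum]
    simp only [div_eq_mul_inv, ← Finset.mul_sum]
    ring
  · rw [intervalIntegrable_iff_integrableOn_Icc_of_le zero_le_one]
    exact hi

/-- The unnormalised average of the monomial `∏ i ∈ T, x i` in the Jacobi `β`-ensemble. -/
noncomputable def jacobiMoment (N : ℕ) (β a b : ℝ) (T : Finset (Fin N)) : ℝ :=
  ∫ x, (∏ i ∈ T, x i) * jacobiDensity N β a b x ∂(cubeMeasure N)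

theorem jacobiMoment_map {N : ℕ} (β a b : ℝ) (σ : Equiv.Perm (Fin N)) (T : Finset (Fin N)) :
    jacobiMoment N β a b (T.map σ.toEmbedding) = jacobiMoment N β a b T := by
  rw [jacobiMoment, jacobiMoment,
    ← integral_comp_perm σ fun x => (∏ i ∈ T, x i) * jacobiDensity N β a b x]
  simp only [Finset.prod_map, Equiv.coe_toEmbedding, jacobiDensity_comp_perm]

theorem map_swap_eq_of_notMem {α : Type*} [DecidableEq α] {T : Finset α} {i j : α} (hi : i ∉ T)
    (hj : j ∉ T) : T.map (Equiv.swap i j).toEmbedding = T := by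
  rw [Finset.map_eq_image]
  refine (Finset.image_congr fun k hk => ?_).trans Finset.image_id
  exact Equiv.swap_apply_of_ne_of_ne (fun h => hi (h ▸ hk)) (fun h => hj (h ▸ hk))

theorem jacobiMoment_insert_eq {N : ℕ} (β a b : ℝ) {T : Finset (Fin N)} {i j : Fin N} (hi : i ∉ T)
    (hj : j ∉ T) :
    jacobiMoment N β a b (insert i T) = jacobiMoment N β a b (insert j T) := by
  rw [← jacobiMoment_map β a b (Equiv.swap i j) (insert i T), Finset.map_insert,
    map_swap_eq_of_notMem hi hj]
  simp

theorem integrable_comp_perm {N : ℕ} (σ : Equiv.Perm (Fin N)) {f : (Fin N → ℝ) → ℝ}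
    (hf : Integrable f (cubeMeasure N)) :
    Integrable (fun x => f fun i => x (σ i)) (cubeMeasure N) := by
  have h := ((measurePreserving_comp_perm σ).integrable_comp_emb
    (MeasurableEquiv.measurableEmbedding _)).mpr hf
  simpa only [Function.comp_def, piCongrLeft_symm_eq_comp] using h

theorem two_mul_integral_singular {n : ℕ} {T : Finset (Fin (n + 1))} (hT : 0 ∉ T) (j : Fin n)
    {β a b : ℝ} (hβ : 0 < β) (ha : -1 < a) (hb : -1 < b) :
    2 * ∫ x, (∏ i ∈ T, x i) * (x 0 * (1 - x 0) / (x 0 - x j.succ)) *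
        jacobiDensity (n + 1) β a b x ∂(cubeMeasure (n + 1)) =
      (jacobiMoment (n + 1) β a b T - 2 * jacobiMoment (n + 1) β a b (insert 0 T)) +
        if j.succ ∈ T then
          jacobiMoment (n + 1) β a b (insert 0 T) - jacobiMoment (n + 1) β a b T else 0 := by
  set σ := Equiv.swap 0 j.succ with hσ
  have hf := integrable_singular_mul_jacobiDensity T j hβ ha hb
  have hfσ := integrable_comp_perm σ hf
  have hσ0 : σ 0 = j.succ := Equiv.swap_apply_left _ _
  have hσj : σ j.succ = 0 := Equiv.swap_apply_right _ _
  rw [two_mul]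
  nth_rewrite 2 [← integral_comp_perm σ]
  rw [← integral_add hf hfσ]
  simp only [jacobiDensity_comp_perm, hσ0, hσj]
  have hW : ∀ x : Fin (n + 1) → ℝ, x 0 = x j.succ → jacobiDensity (n + 1) β a b x = 0 :=
    fun x h => by
      rw [jacobiDensity, interaction_eq_zero hβ (Fin.succ_ne_zero j).symm h, mul_zero]
  by_cases hj : j.succ ∈ T
  · obtain ⟨S, hjS, rfl⟩ : ∃ S, j.succ ∉ S ∧ insert j.succ S = T :=
      ⟨T.erase j.succ, Finset.notMem_erase _ _, Finset.insert_erase hj⟩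
    have h0S : 0 ∉ S := fun h => hT (Finset.mem_insert_of_mem h)
    have hS : ∀ x : Fin (n + 1) → ℝ, ∏ i ∈ S, x (σ i) = ∏ i ∈ S, x i := fun x => by
      conv_rhs => rw [← map_swap_eq_of_notMem h0S hjS, Finset.prod_map]
      rfl
    rw [if_pos hj]
    have key : ∀ x : Fin (n + 1) → ℝ,
        (∏ i ∈ insert j.succ S, x i) * (x 0 * (1 - x 0) / (x 0 - x j.succ)) *
            jacobiDensity (n + 1) β a b x +
          (∏ i ∈ insert j.succ S, x (σ i)) * (x j.succ * (1 - x j.succ) / (x j.succ - x 0)) *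
            jacobiDensity (n + 1) β a b x =
        -((∏ i ∈ insert 0 (insert j.succ S), x i) * jacobiDensity (n + 1) β a b x) := fun x => by
      rw [Finset.prod_insert hT, Finset.prod_insert hjS, Finset.prod_insert hjS, hS, hσj]
      rcases eq_or_ne (x 0) (x j.succ) with h | h
      · simp [hW x h]
      · have h1 : x 0 - x j.succ ≠ 0 := sub_ne_zero.mpr h
        rw [← neg_sub (x 0) (x j.succ)]
        field_simp
        ring
    simp only [key, integral_neg, jacobiMoment]
    ring
  · have hS : ∀ x : Fin (n + 1) → ℝ, ∏ i ∈ T, x (σ i) = ∏ i ∈ T, x i := fun x => by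
      conv_rhs => rw [← map_swap_eq_of_notMem hT hj, Finset.prod_map]
      rfl
    rw [if_neg hj]
    have key : ∀ x : Fin (n + 1) → ℝ,
        (∏ i ∈ T, x i) * (x 0 * (1 - x 0) / (x 0 - x j.succ)) *
            jacobiDensity (n + 1) β a b x +
          (∏ i ∈ T, x (σ i)) * (x j.succ * (1 - x j.succ) / (x j.succ - x 0)) *
            jacobiDensity (n + 1) β a b x =
        (∏ i ∈ T, x i) * jacobiDensity (n + 1) β a b x -
          (∏ i ∈ insert 0 T, x i) * jacobiDensity (n + 1) β a b x -
          (∏ i ∈ insert j.succ T, x i) * jacobiDensity (n + 1) β a b x := fun x => by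
      rw [Finset.prod_insert hT, Finset.prod_insert hj, hS]
      rcases eq_or_ne (x 0) (x j.succ) with h | h
      · simp [hW x h]
      · have h1 : x 0 - x j.succ ≠ 0 := sub_ne_zero.mpr h
        rw [← neg_sub (x 0) (x j.succ)]
        field_simp
        ring
    have hM := jacobiMoment_insert_eq β a b hT hj
    have hi := fun T : Finset (Fin (n + 1)) => integrable_prod_mul_jacobiDensity T hβ ha hb
    simp only [key]
    have h2 : Integrable (fun x => (∏ i ∈ T, x i) * jacobiDensity (n + 1) β a b x -
        (∏ i ∈ insert 0 T, x i) * jacobiDensity (n + 1) β a b x) (cubeMeasure (n + 1)) :=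
      (hi _).sub (hi _)
    rw [integral_sub h2 (hi _), integral_sub (hi _) (hi _)]
    simp only [jacobiMoment] at hM ⊢
    linarith

theorem integral_aomoto_cube_eq_zero {n : ℕ} {T : Finset (Fin (n + 1))} (hT : 0 ∉ T)
    {β a b : ℝ} (hβ : 0 < β) (ha : -1 < a) (hb : -1 < b)
    (hi : Integrable (fun x => (∏ i ∈ T, x i) * ((a + 1) - (a + b + 2) * x 0 +
      β * ∑ j : Fin n, x 0 * (1 - x 0) / (x 0 - x j.succ)) * jacobiDensity (n + 1) β a b x)
      (cubeMeasure (n + 1))) :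
    ∫ x, (∏ i ∈ T, x i) * ((a + 1) - (a + b + 2) * x 0 +
      β * ∑ j : Fin n, x 0 * (1 - x 0) / (x 0 - x j.succ)) * jacobiDensity (n + 1) β a b x
      ∂(cubeMeasure (n + 1)) = 0 := by
  have : SigmaFinite (cubeMeasure n) := by unfold cubeMeasure; infer_instance
  let e := MeasurableEquiv.piFinSuccAbove (fun _ : Fin (n + 1) => ℝ) 0
  have hmp : MeasurePreserving e _ _ := measurePreserving_piFinSucc n
  rw [← hmp.symm.integral_comp']
  rw [← hmp.symm.integrable_comp_emb e.symm.measurableEmbedding] at hi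
  rw [Function.comp_def] at hi
  rw [integral_prod_symm _ hi]
  refine integral_eq_zero_of_ae ?_
  filter_upwards [hi.prod_left_ae] with y hy
  have he0 : ∀ t, e.symm (t, y) 0 = t := fun t => rfl
  have hes : ∀ t (j : Fin n), e.symm (t, y) j.succ = y j := fun t j => rfl
  have hP : ∀ t, ∏ i ∈ T, e.symm (t, y) i = ∏ i ∈ T, e.symm (0, y) i := fun t =>
    Finset.prod_congr rfl fun i hiT => by
      obtain ⟨j, rfl⟩ := Fin.exists_succ_eq.mpr fun h : i = 0 => hT (h ▸ hiT)
      rfl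
  set C := (∏ i ∈ T, e.symm (0, y) i) * jacobiDensity n β a b y with hC
  have hF : ∀ t, (∏ i ∈ T, e.symm (t, y) i) * ((a + 1) - (a + b + 2) * e.symm (t, y) 0 +
      β * ∑ j : Fin n, e.symm (t, y) 0 * (1 - e.symm (t, y) 0) /
        (e.symm (t, y) 0 - e.symm (t, y) j.succ)) *
          jacobiDensity (n + 1) β a b (e.symm (t, y)) =
      C * (((a + 1) - (a + b + 2) * t + β * ∑ j, t * (1 - t) / (t - y j)) *
        (t ^ a * (1 - t) ^ b * ∏ j, |y j - t| ^ β)) := fun t => by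
    rw [jacobiDensity_succ, hP]
    simp only [he0, hes, hC]
    ring
  simp only [hF] at hy
  simp only [hF, Pi.zero_apply]
  rcases eq_or_ne C 0 with h0 | h0
  · simp [h0]
  · rw [integral_const_mul, integral_aomoto_eq_zero hβ ha hb y, mul_zero]
    exact (integrable_const_mul_iff (isUnit_iff_ne_zero.mpr h0) _).mp hy

/-- Aomoto's recursion between moments of consecutive degrees. -/
theorem jacobiMoment_insert_zero {n : ℕ} {T : Finset (Fin (n + 1))} (hT : 0 ∉ T)
    {β a b : ℝ} (hβ : 0 < β) (ha : -1 < a) (hb : -1 < b) :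
    jacobiMoment (n + 1) β a b (insert 0 T) * (a + b + 2 + (2 * n - T.card) * β / 2) =
      jacobiMoment (n + 1) β a b T * (a + 1 + (n - T.card) * β / 2) := by
  have hi := fun T : Finset (Fin (n + 1)) => integrable_prod_mul_jacobiDensity T hβ ha hb
  have hs := fun j => integrable_singular_mul_jacobiDensity T j hβ ha hb
  have hF : ∀ x : Fin (n + 1) → ℝ, (∏ i ∈ T, x i) * ((a + 1) - (a + b + 2) * x 0 +
      β * ∑ j : Fin n, x 0 * (1 - x 0) / (x 0 - x j.succ)) * jacobiDensity (n + 1) β a b x =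
      (a + 1) * ((∏ i ∈ T, x i) * jacobiDensity (n + 1) β a b x) -
      (a + b + 2) * ((∏ i ∈ insert 0 T, x i) * jacobiDensity (n + 1) β a b x) +
      β * ∑ j : Fin n, (∏ i ∈ T, x i) * (x 0 * (1 - x 0) / (x 0 - x j.succ)) *
        jacobiDensity (n + 1) β a b x := fun x => by
    rw [Finset.prod_insert hT, ← Finset.sum_mul, ← Finset.mul_sum]
    ring
  have hi1 := (hi T).const_mul (a + 1)
  have hi2 := (hi (insert 0 T)).const_mul (a + b + 2)
  have hi12 : Integrable (fun x =>
      (a + 1) * ((∏ i ∈ T, x i) * jacobiDensity (n + 1) β a b x) -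
      (a + b + 2) * ((∏ i ∈ insert 0 T, x i) * jacobiDensity (n + 1) β a b x))
      (cubeMeasure (n + 1)) := hi1.sub hi2
  have hi3 := (integrable_finsetSum Finset.univ fun j _ => hs j).const_mul β
  have h0 := integral_aomoto_cube_eq_zero hT hβ ha hb
    (by simp only [hF]; exact hi12.add hi3)
  simp only [hF] at h0
  rw [integral_add hi12 hi3, integral_sub hi1 hi2, integral_const_mul,
    integral_const_mul, integral_const_mul, integral_finsetSum _ fun j _ => hs j] at h0
  have hcard : ∀ c : ℝ, ∑ j : Fin n, (if j.succ ∈ T then c else 0) = T.card * c := fun c => by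
    have h := Fin.sum_univ_succ fun i => if i ∈ T then c else 0
    rw [if_neg hT, zero_add] at h
    rw [← h]
    simp
  have hsum := Finset.sum_congr (rfl : (Finset.univ : Finset (Fin n)) = Finset.univ)
    fun j _ => two_mul_integral_singular hT j hβ ha hb
  rw [← Finset.mul_sum, Finset.sum_add_distrib, hcard, Finset.sum_const, Finset.card_univ,
    Fintype.card_fin, nsmul_eq_mul] at hsum
  simp only [jacobiMoment] at hsum ⊢
  linear_combination -h0 + β / 2 * hsum

theorem jacobiMoment_eq {n : ℕ} {β a b : ℝ} (hβ : 0 < β) (ha : -1 < a) (hb : -1 < b)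
    (T : Finset (Fin (n + 1))) :
    jacobiMoment (n + 1) β a b T = jacobiMoment (n + 1) β a b ∅ *
      ∏ j ∈ Finset.range T.card,
        (a + 1 + (n - j) * β / 2) / (a + b + 2 + (2 * n - j) * β / 2) := by
  induction h : T.card generalizing T with
  | zero => simp [Finset.card_eq_zero.mp h]
  | succ k ih =>
    obtain ⟨c, hc⟩ := Finset.card_pos.mp (by omega : 0 < T.card)
    obtain ⟨S, h0S, hS, hTS⟩ : ∃ S : Finset (Fin (n + 1)), 0 ∉ S ∧ S.card = k ∧
        jacobiMoment (n + 1) β a b T = jacobiMoment (n + 1) β a b (insert 0 S) := by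
      have hmem : 0 ∈ T.map (Equiv.swap 0 c).toEmbedding :=
        Finset.mem_map.mpr ⟨c, hc, Equiv.swap_apply_right _ _⟩
      refine ⟨(T.map (Equiv.swap 0 c).toEmbedding).erase 0, Finset.notMem_erase _ _, ?_, ?_⟩
      · rw [Finset.card_erase_of_mem hmem, Finset.card_map, h, Nat.add_sub_cancel]
      · rw [Finset.insert_erase hmem, jacobiMoment_map]
    have hrec := jacobiMoment_insert_zero h0S hβ ha hb
    have hk : (k : ℝ) ≤ n := by
      have := T.card_le_univ
      rw [h, Fintype.card_fin] at this
      exact_mod_cast Nat.le_of_succ_le_succ this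
    have hden : 0 < a + b + 2 + (2 * n - k) * β / 2 := by
      have hk' : (0 : ℝ) ≤ 2 * n - k := by linarith [(Nat.cast_nonneg n : (0 : ℝ) ≤ n)]
      have := mul_nonneg hk' hβ.le
      linarith
    rw [hS] at hrec
    rw [hTS, Finset.prod_range_succ, ← mul_assoc, ← ih S hS, ← mul_div_assoc,
      eq_div_iff hden.ne', hrec]

/-- The Jacobi `β`-ensemble average of the `l`-th elementary symmetric polynomial:
`⟨e_l⟩ = C(N,l) ∏_{j=1}^{l} (a + 1 + (N-j)β/2)/(a + b + 2 + (2N-j-1)β/2)`. -/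
theorem jacobi_beta_ensemble_average_esym (β : ℝ) (hβ : 0 < β) (N : ℕ) (hN : 0 < N)
    (a b : ℝ) (ha : -1 < a) (hb : -1 < b) (l : ℕ) (hl : l ≤ N) :
    (∫ x in Set.univ.pi (fun _ : Fin N => Set.Icc (0 : ℝ) 1),
        esym N l x * ((∏ i, x i ^ a * (1 - x i) ^ b) * interaction N β x)) /
      (∫ x in Set.univ.pi (fun _ : Fin N => Set.Icc (0 : ℝ) 1),
        (∏ i, x i ^ a * (1 - x i) ^ b) * interaction N β x)
      = (N.choose l : ℝ) *
          ∏ j ∈ Finset.range l,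
            (a + 1 + ((N : ℝ) - (j + 1)) * β / 2) /
              (a + b + 2 + (2 * (N : ℝ) - (j + 1) - 1) * β / 2) := by
  obtain ⟨n, rfl⟩ : ∃ n, N = n + 1 := ⟨N - 1, by omega⟩
  simp only [volume_restrict_cube]
  change (∫ x, esym (n + 1) l x * jacobiDensity (n + 1) β a b x ∂(cubeMeasure (n + 1))) /
    (∫ x, jacobiDensity (n + 1) β a b x ∂(cubeMeasure (n + 1))) = _
  have hZ := integral_jacobiDensity_pos (n + 1) hβ ha hb
  have h0 : jacobiMoment (n + 1) β a b ∅ =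
      ∫ x, jacobiDensity (n + 1) β a b x ∂(cubeMeasure (n + 1)) := by
    simp [jacobiMoment]
  have hsum : ∫ x, esym (n + 1) l x * jacobiDensity (n + 1) β a b x ∂(cubeMeasure (n + 1)) =
      ∑ S ∈ Finset.powersetCard l (Finset.univ : Finset (Fin (n + 1))),
        jacobiMoment (n + 1) β a b S := by
    simp only [esym, Finset.sum_mul, jacobiMoment]
    exact integral_finsetSum _ fun S _ => integrable_prod_mul_jacobiDensity S hβ ha hb
  have hterm : ∀ S ∈ Finset.powersetCard l (Finset.univ : Finset (Fin (n + 1))),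
      jacobiMoment (n + 1) β a b S =
        (∫ x, jacobiDensity (n + 1) β a b x ∂(cubeMeasure (n + 1))) *
          ∏ j ∈ Finset.range l,
            (a + 1 + (n - j) * β / 2) / (a + b + 2 + (2 * n - j) * β / 2) := fun S hS => by
    rw [jacobiMoment_eq hβ ha hb, h0, (Finset.mem_powersetCard.mp hS).2]
  rw [hsum, Finset.sum_congr rfl hterm, Finset.sum_const, Finset.card_powersetCard,
    Finset.card_univ, Fintype.card_fin, nsmul_eq_mul, div_eq_iff hZ.ne', mul_assoc,
    mul_comm (∏ j ∈ _, _)]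
  congr 2
  refine Finset.prod_congr rfl fun j _ => ?_
  push_cast
  congr 2 <;> ring
end

section
/- Let β > 0, let N be a positive integer, let a > −1 be real, and let 0 ≤ l ≤ N. Then the Laguerre β-ensemble average of the l-th elementary symmetric polynomial is ⟨e_l⟩ = C(N,l) · ∏_{j=1}^{l} (a + 1 + (N−j)β/2), where C(N,l) is the binomial coefficient. Explicitly: ∫_{(0,∞)^N} e_l(x) ∏_{i=1}^N x_i^a e^{−x_i} ∏_{1≤j<k≤N} |x_k−x_j|^β dx divided by ∫_{(0,∞)^N} ∏_{i=1}^N x_i^a e^{−x_i} ∏_{1≤j<k≤N} |x_k−x_j|^β dx equals C(N,l) ∏_{j=1}^{l} (a+1+(N−j)β/2). -/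
open MeasureTheory

/-- Lebesgue measure on the open positive orthant. -/
noncomputable def orthantMeasure (N : ℕ) : Measure (Fin N → ℝ) :=
  Measure.pi fun _ => (volume : Measure ℝ).restrict (Set.Ioi 0)

lemma restrict_orthant_eq (N : ℕ) :
    (volume : Measure (Fin N → ℝ)).restrict (Set.univ.pi fun _ => Set.Ioi (0 : ℝ)) =
      orthantMeasure N := by
  rw [orthantMeasure, volume_pi, Measure.restrict_pi_pi]

lemma ae_orthant_pos (N : ℕ) : ∀ᵐ x ∂orthantMeasure N, ∀ i, 0 < x i := by
  rw [← restrict_orthant_eq]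
  filter_upwards [ae_restrict_mem
    (MeasurableSet.univ_pi fun _ => measurableSet_Ioi)] with x hx i
  exact hx i trivial

lemma integral_orthant_comp_perm {N : ℕ} (σ : Equiv.Perm (Fin N)) (f : (Fin N → ℝ) → ℝ) :
    ∫ x, f (x ∘ σ) ∂orthantMeasure N = ∫ x, f x ∂orthantMeasure N := by
  have h := measurePreserving_arrowCongr' (β₁ := ℝ) (β₂ := ℝ)
    (fun _ : Fin N => (volume : Measure ℝ).restrict (Set.Ioi 0))
    (fun _ : Fin N => (volume : Measure ℝ).restrict (Set.Ioi 0)) σ.symm (MeasurableEquiv.refl ℝ)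
    (fun _ => MeasurePreserving.id _)
  exact h.integral_comp' f

lemma integral_Ioi_deriv_eq_zero {f f' : ℝ → ℝ}
    (hderiv : ∀ t, 0 < t → HasDerivAt f (f' t) t)
    (hf' : IntegrableOn f' (Set.Ioi 0)) (hf : IntegrableOn f (Set.Ioi 0))
    (h0 : Filter.Tendsto f (nhdsWithin 0 (Set.Ioi 0)) (nhds 0)) :
    ∫ t in Set.Ioi (0 : ℝ), f' t = 0 := by
  have hlim := tendsto_zero_of_hasDerivAt_of_integrableOn_Ioi hderiv hf' hf
  have hEq : ∀ t, 0 < t → Function.update f 0 0 =ᶠ[nhds t] f := fun t ht => by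
    filter_upwards [lt_mem_nhds ht] with s hs
    exact Function.update_of_ne hs.ne' _ _
  have h := integral_Ioi_of_hasDerivAt_of_tendsto (f := Function.update f 0 0) (f' := f')
    (a := 0) (m := 0) ?_ (fun t ht => (hderiv t ht).congr_of_eventuallyEq (hEq t ht)) hf' ?_
  · simpa using h
  · rw [continuousWithinAt_update_same]
    simpa [Set.Ici_sdiff_left] using h0
  · refine hlim.congr' ?_
    filter_upwards [Filter.eventually_gt_atTop 0] with s hs
    exact (Function.update_of_ne hs.ne' _ _).symm

/-- The integral of a partial derivative over the positive orthant vanishes. -/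
lemma integral_orthant_partial_deriv_eq_zero {n : ℕ} (i : Fin (n + 1))
    {f f' : (Fin (n + 1) → ℝ) → ℝ}
    (hderiv : ∀ x : Fin (n + 1) → ℝ, (∀ j, 0 < x j) →
      HasDerivAt (fun t => f (Function.update x i t)) (f' x) (x i))
    (hf : Integrable f (orthantMeasure (n + 1))) (hf' : Integrable f' (orthantMeasure (n + 1)))
    (h0 : ∀ x : Fin (n + 1) → ℝ, (∀ j, 0 < x j) →
      Filter.Tendsto (fun t => f (Function.update x i t)) (nhdsWithin 0 (Set.Ioi 0)) (nhds 0)) :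
    ∫ x, f' x ∂orthantMeasure (n + 1) = 0 := by
  have hmp := (measurePreserving_piFinSuccAbove
    (fun _ : Fin (n + 1) => (volume : Measure ℝ).restrict (Set.Ioi 0)) i).symm
  rw [orthantMeasure] at hf hf' ⊢
  rw [← hmp.integral_comp' f']
  replace hf := (hmp.integrable_comp_emb (MeasurableEquiv.measurableEmbedding _)).2 hf
  replace hf' := (hmp.integrable_comp_emb (MeasurableEquiv.measurableEmbedding _)).2 hf'
  change Integrable (fun z => f' _) _ at hf'
  rw [integral_prod_symm _ hf']
  refine integral_eq_zero_of_ae ?_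
  filter_upwards [hf.prod_left_ae, hf'.prod_left_ae, ae_orthant_pos n] with y h1 h2 hy
  have key : ∀ s t : ℝ, Function.update (i.insertNth s y : Fin (n + 1) → ℝ) i t =
      i.insertNth t y := fun s t => Fin.update_insertNth (α := fun _ => ℝ) i s t y
  have hpos : ∀ t : ℝ, 0 < t → ∀ j, 0 < (i.insertNth t y : Fin (n + 1) → ℝ) j := by
    intro t ht j
    refine Fin.succAboveCases i ?_ (fun k => ?_) j
    · simpa using ht
    · simpa using hy k
  refine integral_Ioi_deriv_eq_zero (f := fun t => f (i.insertNth t y)) (fun t ht => ?_) h2 h1 ?_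
  · have := hderiv _ (hpos t ht)
    change HasDerivAt _ (f' (i.insertNth t y)) t
    simpa [key] using this
  · have := h0 _ (hpos 1 one_pos)
    simpa only [key] using this

lemma hasDerivAt_finset_prod_of_logDeriv {ι : Type*} (s : Finset ι) {f : ι → ℝ → ℝ} {c : ι → ℝ}
    {t : ℝ} (h : ∀ p ∈ s, HasDerivAt (f p) (f p t * c p) t) :
    HasDerivAt (fun u => ∏ p ∈ s, f p u) ((∏ p ∈ s, f p t) * ∑ p ∈ s, c p) t := by
  classical
  induction s using Finset.induction_on with
  | empty => simpa using hasDerivAt_const t (1 : ℝ)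
  | insert p s hp ih =>
    simp only [Finset.prod_insert hp, Finset.sum_insert hp]
    have h1 := (h p (Finset.mem_insert_self _ _)).mul
      (ih fun q hq => h q (Finset.mem_insert_of_mem hq))
    refine h1.congr_deriv ?_
    ring

lemma integrableOn_rpow_mul_exp_mul_pow {a : ℝ} (ha : -1 < a) (M : ℕ) :
    IntegrableOn (fun t : ℝ => t ^ a * Real.exp (-t) * (1 + t) ^ M) (Set.Ioi 0) := by
  have h1 := (integrableOn_rpow_mul_exp_neg_mul_rpow (p := 1) (b := 1 / 2) ha one_pos
    (by norm_num)).const_mul (2 ^ M * (M.factorial : ℝ) * Real.exp (1 / 2))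
  refine Integrable.mono' h1 (by fun_prop) ?_
  filter_upwards [ae_restrict_mem measurableSet_Ioi] with t ht
  have ht : 0 < t := ht
  have h2 := Real.pow_div_factorial_le_exp ((1 + t) / 2) (by positivity) M
  rw [div_le_iff₀ (by positivity), div_pow, div_le_iff₀ (by positivity)] at h2
  rw [Real.norm_of_nonneg (by positivity), Real.rpow_one]
  have e1 : Real.exp ((1 + t) / 2) = Real.exp (1 / 2) * Real.exp (t / 2) := by
    rw [← Real.exp_add]; ring_nf
  have e2 : Real.exp (-(1 / 2) * t) = Real.exp (-t) * Real.exp (t / 2) := by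
    rw [← Real.exp_add]; ring_nf
  calc t ^ a * Real.exp (-t) * (1 + t) ^ M
      ≤ t ^ a * Real.exp (-t) * (Real.exp ((1 + t) / 2) * M.factorial * 2 ^ M) := by gcongr
    _ = _ := by rw [e1, e2]; ring

/-- The Laguerre weight times a power of `∏ (1 + x_i)`. -/
noncomputable def laguerreMajorant (N : ℕ) (a : ℝ) (M : ℕ) (x : Fin N → ℝ) : ℝ :=
  (∏ i, x i ^ a * Real.exp (-x i)) * (∏ i, (1 + x i)) ^ M

lemma integrable_laguerreMajorant (N : ℕ) {a : ℝ} (ha : -1 < a) (M : ℕ) :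
    Integrable (laguerreMajorant N a M) (orthantMeasure N) := by
  have h := Integrable.fintype_prod (ι := Fin N) (fun _ => integrableOn_rpow_mul_exp_mul_pow ha M)
  refine h.congr (Filter.Eventually.of_forall fun x => ?_)
  simp only [laguerreMajorant, Finset.prod_mul_distrib, Finset.prod_pow]

/-- The pair interaction with `|x_j - x_k|` regularised to `((x_j - x_k)² + ε)^(1/2)`. -/
noncomputable def regInteraction (N : ℕ) (β ε : ℝ) (x : Fin N → ℝ) : ℝ :=
  ∏ p ∈ (Finset.univ : Finset (Fin N)).offDiag, ((x p.1 - x p.2) ^ 2 + ε) ^ (β / 4)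

/-- The Laguerre `β`-ensemble weight with regularised interaction. -/
noncomputable def regWeight (N : ℕ) (β a ε : ℝ) (x : Fin N → ℝ) : ℝ :=
  (∏ i, x i ^ a * Real.exp (-x i)) * regInteraction N β ε x

lemma regInteraction_zero (N : ℕ) (β : ℝ) (x : Fin N → ℝ) :
    regInteraction N β 0 x = interaction N β x := by
  have hsplit : (Finset.univ : Finset (Fin N)).offDiag =
      Finset.univ.filter (fun p : Fin N × Fin N => p.1 < p.2) ∪
        Finset.univ.filter (fun p : Fin N × Fin N => p.2 < p.1) := by
    ext p
    simp [lt_or_lt_iff_ne]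
  have hdisj : Disjoint (Finset.univ.filter (fun p : Fin N × Fin N => p.1 < p.2))
      (Finset.univ.filter (fun p : Fin N × Fin N => p.2 < p.1)) :=
    Finset.disjoint_filter.2 fun p _ h => h.not_gt
  have hswap : ∏ p ∈ Finset.univ.filter (fun p : Fin N × Fin N => p.2 < p.1),
        ((x p.1 - x p.2) ^ 2 + 0) ^ (β / 4) =
      ∏ p ∈ Finset.univ.filter (fun p : Fin N × Fin N => p.1 < p.2),
        ((x p.1 - x p.2) ^ 2 + 0) ^ (β / 4) := by
    refine Finset.prod_equiv (Equiv.prodComm _ _) (by simp) fun p _ => ?_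
    simp only [Equiv.prodComm_apply, Prod.fst_swap, Prod.snd_swap]
    congr 2
    ring
  rw [regInteraction, hsplit, Finset.prod_union hdisj, hswap, ← Finset.prod_mul_distrib,
    interaction]
  refine Finset.prod_congr rfl fun p _ => ?_
  rw [← sq, add_zero, ← sq_abs (x p.1 - x p.2), abs_sub_comm, ← Real.rpow_natCast,
    ← Real.rpow_natCast, ← Real.rpow_mul (abs_nonneg _), ← Real.rpow_mul (abs_nonneg _)]
  congr 1
  push_cast
  ring

lemma regInteraction_comp_perm {N : ℕ} (β ε : ℝ) (σ : Equiv.Perm (Fin N)) (x : Fin N → ℝ) :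
    regInteraction N β ε (x ∘ σ) = regInteraction N β ε x := by
  refine Finset.prod_equiv (Equiv.prodCongr σ σ) (by simp) fun p _ => ?_
  simp

lemma regWeight_comp_perm {N : ℕ} (β a ε : ℝ) (σ : Equiv.Perm (Fin N)) (x : Fin N → ℝ) :
    regWeight N β a ε (x ∘ σ) = regWeight N β a ε x := by
  rw [regWeight, regWeight, regInteraction_comp_perm]
  congr 1
  exact Equiv.prod_comp σ fun i => x i ^ a * Real.exp (-x i)

@[fun_prop]
lemma measurable_regWeight (N : ℕ) (β a ε : ℝ) : Measurable (regWeight N β a ε) := by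
  unfold regWeight regInteraction
  fun_prop

section Bounds

variable {N : ℕ} {x : Fin N → ℝ}

lemma prod_le_prod_one_add (hx : ∀ i, 0 < x i) (A : Finset (Fin N)) {g : Fin N → ℝ}
    (h0 : ∀ i, 0 ≤ g i) (h1 : ∀ i, g i ≤ 1 + x i) : ∏ i ∈ A, g i ≤ ∏ i, (1 + x i) := by
  classical
  rw [← Finset.prod_ite_mem_eq]
  refine Finset.prod_le_prod (fun i _ => ?_) fun i _ => ?_
  · split_ifs
    exacts [h0 i, zero_le_one]
  · split_ifs
    · exact h1 i
    · linarith [hx i]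

lemma one_le_prod_one_add (hx : ∀ i, 0 < x i) : 1 ≤ ∏ i, (1 + x i) := by
  simpa using prod_le_prod_one_add hx ∅ (g := x) (fun i => (hx i).le) (fun i => by linarith)

lemma one_add_le_prod (hx : ∀ i, 0 < x i) (i : Fin N) : 1 + x i ≤ ∏ i, (1 + x i) := by
  simpa using prod_le_prod_one_add hx {i} (g := fun j => 1 + x j)
    (fun i => by linarith [hx i]) (fun i => le_rfl)

lemma regInteraction_nonneg {β ε : ℝ} (hε : 0 ≤ ε) : 0 ≤ regInteraction N β ε x :=
  Finset.prod_nonneg fun _ _ => by positivity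

lemma regWeight_nonneg {β a ε : ℝ} (hε : 0 ≤ ε) (hx : ∀ i, 0 < x i) :
    0 ≤ regWeight N β a ε x :=
  mul_nonneg (Finset.prod_nonneg fun i _ =>
    mul_nonneg (Real.rpow_nonneg (hx i).le _) (Real.exp_pos _).le) (regInteraction_nonneg hε)

lemma regInteraction_le {β ε : ℝ} (hβ : 0 < β) (hε : 0 ≤ ε) (hε1 : ε ≤ 1)
    (hx : ∀ i, 0 < x i) :
    regInteraction N β ε x ≤
      (∏ i, (1 + x i)) ^ (⌈β / 2⌉₊ * (Finset.univ : Finset (Fin N)).offDiag.card) := by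
  rw [pow_mul, regInteraction, ← Finset.prod_const]
  refine Finset.prod_le_prod (fun p _ => by positivity) fun p _ => ?_
  have h1 := one_le_prod_one_add hx
  have h2 := one_add_le_prod hx p.1
  have h3 := one_add_le_prod hx p.2
  have h4 := hx p.1
  have h5 := hx p.2
  set T := ∏ i, (1 + x i)
  have hsq : (x p.1 - x p.2) ^ 2 + ε ≤ T ^ 2 := by
    rcases le_total (x p.1) (x p.2) with h | h <;> nlinarith
  calc ((x p.1 - x p.2) ^ 2 + ε) ^ (β / 4) ≤ (T ^ 2) ^ (β / 4) := by gcongr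
    _ = T ^ (β / 2) := by
      rw [← Real.rpow_natCast, ← Real.rpow_mul (by linarith)]
      congr 1
      push_cast
      ring
    _ ≤ T ^ ((⌈β / 2⌉₊ : ℕ) : ℝ) := Real.rpow_le_rpow_of_exponent_le h1 (Nat.le_ceil _)
    _ = _ := Real.rpow_natCast _ _

lemma exists_mul_regWeight_le (N : ℕ) {β : ℝ} (a : ℝ) (hβ : 0 < β) (k : ℕ) :
    ∃ M, ∀ ε, 0 ≤ ε → ε ≤ 1 → ∀ x : Fin N → ℝ, (∀ i, 0 < x i) →
      (∏ i, (1 + x i)) ^ k * regWeight N β a ε x ≤ laguerreMajorant N a M x := by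
  refine ⟨⌈β / 2⌉₊ * (Finset.univ : Finset (Fin N)).offDiag.card + k, fun ε h0 h1 x hx => ?_⟩
  have hT := one_le_prod_one_add hx
  have hP : 0 ≤ ∏ i, x i ^ a * Real.exp (-x i) := Finset.prod_nonneg fun i _ =>
    mul_nonneg (Real.rpow_nonneg (hx i).le _) (Real.exp_pos _).le
  rw [regWeight, laguerreMajorant, pow_add]
  calc _ = (∏ i, x i ^ a * Real.exp (-x i)) *
        (regInteraction N β ε x * (∏ i, (1 + x i)) ^ k) := by ring
    _ ≤ _ := by
      gcongr
      exact regInteraction_le hβ h0 h1 hx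

end Bounds

lemma integrable_of_le_mul_regWeight {N : ℕ} {β a ε C : ℝ} (hβ : 0 < β) (ha : -1 < a)
    (hε : 0 ≤ ε) (hε1 : ε ≤ 1) (hC : 0 ≤ C) (k : ℕ) {f : (Fin N → ℝ) → ℝ} (hf : Measurable f)
    (hle : ∀ x : Fin N → ℝ, (∀ i, 0 < x i) →
      |f x| ≤ C * ((∏ i, (1 + x i)) ^ k * regWeight N β a ε x)) :
    Integrable f (orthantMeasure N) := by
  obtain ⟨M, hM⟩ := exists_mul_regWeight_le N a hβ k
  refine Integrable.mono' ((integrable_laguerreMajorant N ha M).const_mul C)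
    hf.aestronglyMeasurable ?_
  filter_upwards [ae_orthant_pos N] with x hx
  exact (hle x hx).trans (mul_le_mul_of_nonneg_left (hM ε hε hε1 x hx) hC)

lemma integrable_prod_mul_regWeight {N : ℕ} {β a ε : ℝ} (hβ : 0 < β) (ha : -1 < a)
    (hε : 0 ≤ ε) (hε1 : ε ≤ 1) (A : Finset (Fin N)) :
    Integrable (fun x => (∏ j ∈ A, x j) * regWeight N β a ε x) (orthantMeasure N) := by
  refine integrable_of_le_mul_regWeight hβ ha hε hε1 zero_le_one 1 (by fun_prop) fun x hx => ?_
  rw [one_mul, pow_one, abs_of_nonneg (mul_nonneg (Finset.prod_nonneg fun i _ => (hx i).le)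
    (regWeight_nonneg hε hx))]
  exact mul_le_mul_of_nonneg_right
    (prod_le_prod_one_add hx A (fun i => (hx i).le) fun i => by linarith) (regWeight_nonneg hε hx)

/-- The cross term produced by differentiating the interaction in the variable `x_i`. -/
noncomputable def crossTerm {N : ℕ} (β a ε : ℝ) (A : Finset (Fin N)) (i k : Fin N)
    (x : Fin N → ℝ) : ℝ :=
  (∏ j ∈ A, x j) * x i * ((x i - x k) / ((x i - x k) ^ 2 + ε)) * regWeight N β a ε x

lemma integrable_crossTerm {N : ℕ} {β a ε : ℝ} (hβ : 0 < β) (ha : -1 < a)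
    (hε : 0 < ε) (hε1 : ε ≤ 1) (A : Finset (Fin N)) (i k : Fin N) :
    Integrable (crossTerm β a ε A i k) (orthantMeasure N) := by
  refine integrable_of_le_mul_regWeight (C := ε⁻¹) hβ ha hε.le hε1 (by positivity) 2
    (by unfold crossTerm; fun_prop) fun x hx => ?_
  have hA : 0 ≤ ∏ j ∈ A, x j := Finset.prod_nonneg fun i _ => (hx i).le
  have hW := regWeight_nonneg (β := β) (a := a) hε.le hx
  have hT := one_le_prod_one_add hx
  have h1 : |(x i - x k) / ((x i - x k) ^ 2 + ε)| ≤ ε⁻¹ := by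
    rw [abs_div, abs_of_pos (show 0 < (x i - x k) ^ 2 + ε by positivity), ← one_div,
      div_le_div_iff₀ (by positivity) hε, ← sq_abs (x i - x k)]
    nlinarith [abs_nonneg (x i - x k), sq_nonneg (|x i - x k| - ε)]
  have h2 : ∏ j ∈ A, x j ≤ ∏ i, (1 + x i) :=
    prod_le_prod_one_add hx A (fun i => (hx i).le) fun i => by linarith
  have h3 : x i ≤ ∏ i, (1 + x i) := by linarith [one_add_le_prod hx i]
  rw [crossTerm, abs_mul, abs_mul, abs_mul, abs_of_nonneg hA, abs_of_pos (hx i), abs_of_nonneg hW]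
  have hxi := (hx i).le
  calc _ ≤ (∏ i, (1 + x i)) * (∏ i, (1 + x i)) * ε⁻¹ * regWeight N β a ε x := by gcongr
    _ = _ := by ring

lemma integral_crossTerm_of_mem {N : ℕ} (β a ε : ℝ) {A : Finset (Fin N)} {i k : Fin N}
    (hi : i ∉ A) (hk : k ∈ insert i A) :
    ∫ x, crossTerm β a ε A i k x ∂orthantMeasure N = 0 := by
  rcases Finset.mem_insert.1 hk with rfl | hk
  · simp [crossTerm]
  have hik : i ≠ k := fun h => hi (h ▸ hk)
  have h := integral_orthant_comp_perm (Equiv.swap i k) (crossTerm β a ε A i k)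
  have hneg : ∀ x : Fin N → ℝ,
      crossTerm β a ε A i k (x ∘ Equiv.swap i k) = -crossTerm β a ε A i k x := fun x => by
    have hprod : ∏ j ∈ A.erase k, (x ∘ Equiv.swap i k) j = ∏ j ∈ A.erase k, x j := by
      refine Finset.prod_congr rfl fun j hj => ?_
      rw [Finset.mem_erase] at hj
      have : j ≠ i := fun h => hi (h ▸ hj.2)
      simp [Equiv.swap_apply_of_ne_of_ne this hj.1]
    simp only [crossTerm, regWeight_comp_perm, ← Finset.mul_prod_erase A _ hk, hprod]
    simp only [Function.comp_apply, Equiv.swap_apply_left, Equiv.swap_apply_right]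
    rw [← neg_sub (x i) (x k), neg_sq]
    ring
  simp only [hneg, integral_neg] at h
  linarith

lemma integral_crossTerm_of_notMem {N : ℕ} {β a ε : ℝ} (hβ : 0 < β) (ha : -1 < a)
    (hε : 0 < ε) (hε1 : ε ≤ 1) {A : Finset (Fin N)} {i k : Fin N}
    (hi : i ∉ A) (hk : k ∉ insert i A) :
    ∫ x, crossTerm β a ε A i k x ∂orthantMeasure N =
      (∫ x, (∏ j ∈ A, x j) * regWeight N β a ε x *
        ((x i - x k) ^ 2 / ((x i - x k) ^ 2 + ε)) ∂orthantMeasure N) / 2 := by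
  rw [Finset.mem_insert, not_or] at hk
  have h := integral_orthant_comp_perm (Equiv.swap i k) (crossTerm β a ε A i k)
  have hsum : ∀ x : Fin N → ℝ, crossTerm β a ε A i k (x ∘ Equiv.swap i k) =
      (∏ j ∈ A, x j) * regWeight N β a ε x * ((x i - x k) ^ 2 / ((x i - x k) ^ 2 + ε)) -
        crossTerm β a ε A i k x := fun x => by
    have hprod : ∏ j ∈ A, (x ∘ Equiv.swap i k) j = ∏ j ∈ A, x j := by
      refine Finset.prod_congr rfl fun j hj => ?_
      have h1 : j ≠ i := fun h => hi (h ▸ hj)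
      have h2 : j ≠ k := fun h => hk.2 (h ▸ hj)
      simp [Equiv.swap_apply_of_ne_of_ne h1 h2]
    simp only [crossTerm, regWeight_comp_perm, hprod]
    simp only [Function.comp_apply, Equiv.swap_apply_left, Equiv.swap_apply_right]
    rw [← neg_sub (x i) (x k), neg_sq]
    ring
  have hint := integrable_crossTerm hβ ha hε hε1 A i k
  have hint' : Integrable (fun x => (∏ j ∈ A, x j) * regWeight N β a ε x *
      ((x i - x k) ^ 2 / ((x i - x k) ^ 2 + ε))) (orthantMeasure N) := by
    refine (integrable_prod_mul_regWeight hβ ha hε.le hε1 A).mul_bdd (c := 1)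
      (Measurable.aestronglyMeasurable (by fun_prop)) (Filter.Eventually.of_forall fun x => ?_)
    rw [Real.norm_of_nonneg (by positivity)]
    exact div_le_one_of_le₀ (by linarith) (by positivity)
  simp only [hsum] at h
  rw [integral_sub hint' hint] at h
  linarith

lemma continuous_regWeight_eps {N : ℕ} {β : ℝ} (hβ : 0 < β) (a : ℝ) (x : Fin N → ℝ) :
    Continuous fun ε => regWeight N β a ε x := by
  unfold regWeight regInteraction
  refine continuous_const.mul (continuous_finsetProd _ fun p _ => ?_)
  exact (continuous_const.add continuous_id).rpow_const fun _ => Or.inr (by positivity)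

lemma tendsto_regWeight_mul_ratio {N : ℕ} {β : ℝ} (hβ : 0 < β) (a : ℝ) {i k : Fin N}
    (hik : i ≠ k) (x : Fin N → ℝ) :
    Filter.Tendsto (fun ε => regWeight N β a ε x * ((x i - x k) ^ 2 / ((x i - x k) ^ 2 + ε)))
      (nhdsWithin 0 (Set.Ioi 0)) (nhds (regWeight N β a 0 x)) := by
  have hW := ((continuous_regWeight_eps hβ a x).tendsto 0).mono_left
    (nhdsWithin_le_nhds (s := Set.Ioi (0 : ℝ)))
  rcases eq_or_ne (x i) (x k) with h | h
  · have h0 : regWeight N β a 0 x = 0 := by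
      rw [regWeight, regInteraction, Finset.prod_eq_zero (i := (i, k)) (by simpa using hik),
        mul_zero]
      rw [h, sub_self, add_zero, zero_pow two_ne_zero, Real.zero_rpow (by positivity)]
    simp [h, h0]
  · have hd : (x i - x k) ^ 2 ≠ 0 := pow_ne_zero _ (sub_ne_zero.2 h)
    have hq : Filter.Tendsto (fun ε => (x i - x k) ^ 2 / ((x i - x k) ^ 2 + ε))
        (nhdsWithin 0 (Set.Ioi 0)) (nhds 1) := by
      have : ContinuousAt (fun ε => (x i - x k) ^ 2 / ((x i - x k) ^ 2 + ε)) 0 :=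
        continuousAt_const.div (continuousAt_const.add continuousAt_id) (by simpa using hd)
      simpa [div_self hd] using this.tendsto.mono_left nhdsWithin_le_nhds
    simpa using hW.mul hq

lemma tendsto_integral_prod_mul_regWeight_mul {N : ℕ} {β a : ℝ} (hβ : 0 < β) (ha : -1 < a)
    (A : Finset (Fin N)) {q : ℝ → (Fin N → ℝ) → ℝ} (hq : ∀ ε, Measurable (q ε))
    (hq1 : ∀ ε, 0 < ε → ∀ x, |q ε x| ≤ 1)
    (hlim : ∀ x, Filter.Tendsto (fun ε => regWeight N β a ε x * q ε x)
      (nhdsWithin 0 (Set.Ioi 0)) (nhds (regWeight N β a 0 x))) :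
    Filter.Tendsto
      (fun ε => ∫ x, (∏ j ∈ A, x j) * regWeight N β a ε x * q ε x ∂orthantMeasure N)
      (nhdsWithin 0 (Set.Ioi 0))
      (nhds (∫ x, (∏ j ∈ A, x j) * regWeight N β a 0 x ∂orthantMeasure N)) := by
  obtain ⟨M, hM⟩ := exists_mul_regWeight_le N a hβ 1
  refine tendsto_integral_filter_of_dominated_convergence (laguerreMajorant N a M)
    (Filter.Eventually.of_forall fun ε => by have := hq ε; fun_prop) ?_
    (integrable_laguerreMajorant N ha M) (Filter.Eventually.of_forall fun x => ?_)
  · filter_upwards [Ioc_mem_nhdsGT (zero_lt_one' ℝ)] with ε hε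
    filter_upwards [ae_orthant_pos N] with x hx
    have hA : 0 ≤ ∏ j ∈ A, x j := Finset.prod_nonneg fun i _ => (hx i).le
    have hW := regWeight_nonneg (β := β) (a := a) hε.1.le hx
    have h2 : ∏ j ∈ A, x j ≤ ∏ i, (1 + x i) :=
      prod_le_prod_one_add hx A (fun i => (hx i).le) fun i => by linarith
    refine le_trans ?_ (hM ε hε.1.le hε.2 x hx)
    rw [norm_mul, Real.norm_of_nonneg (mul_nonneg hA hW), pow_one]
    calc _ ≤ (∏ j ∈ A, x j) * regWeight N β a ε x * 1 := by
          gcongr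
          exact hq1 ε hε.1 x
      _ ≤ _ := by
          rw [mul_one]
          gcongr
  · simp only [mul_assoc]
    exact (hlim x).const_mul _

/-- The partial logarithmic derivatives of the pair factors add up to the drift term. -/
lemma sum_offDiag_logDeriv {N : ℕ} (β ε : ℝ) (i : Fin N) (x : Fin N → ℝ) :
    ∑ p ∈ (Finset.univ : Finset (Fin N)).offDiag,
        β / 4 * (2 * (x p.1 - x p.2) * ((if p.1 = i then 1 else 0) - if p.2 = i then 1 else 0)) /
          ((x p.1 - x p.2) ^ 2 + ε) =
      β * ∑ k, (x i - x k) / ((x i - x k) ^ 2 + ε) := by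
  have hsub : ∑ p ∈ (Finset.univ : Finset (Fin N)).offDiag,
        β / 4 * (2 * (x p.1 - x p.2) * ((if p.1 = i then 1 else 0) - if p.2 = i then 1 else 0)) /
          ((x p.1 - x p.2) ^ 2 + ε) =
      ∑ p : Fin N × Fin N,
        β / 4 * (2 * (x p.1 - x p.2) * ((if p.1 = i then 1 else 0) - if p.2 = i then 1 else 0)) /
          ((x p.1 - x p.2) ^ 2 + ε) := by
    refine Finset.sum_subset (Finset.subset_univ _) fun p _ hp => ?_
    have : p.1 = p.2 := by simpa using hp
    simp [this]
  rw [hsub, Fintype.sum_prod_type]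
  have hterm : ∀ j k : Fin N,
      β / 4 * (2 * (x j - x k) * ((if j = i then 1 else 0) - if k = i then 1 else 0)) /
          ((x j - x k) ^ 2 + ε) =
        (if j = i then β / 2 * ((x j - x k) / ((x j - x k) ^ 2 + ε)) else 0) +
          if k = i then β / 2 * ((x k - x j) / ((x k - x j) ^ 2 + ε)) else 0 := by
    intro j k
    have : (x k - x j) ^ 2 = (x j - x k) ^ 2 := by ring
    rw [this]
    split_ifs <;> ring
  simp only [hterm, Finset.sum_add_distrib]
  rw [Finset.sum_comm]
  simp only [Finset.sum_ite_eq', Finset.mem_univ, if_true, ← Finset.mul_sum]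
  ring

lemma hasDerivAt_update_apply {N : ℕ} (x : Fin N → ℝ) (i j : Fin N) :
    HasDerivAt (fun t => Function.update x i t j) (if j = i then 1 else 0) (x i) := by
  have h := hasDerivAt_pi.1 (hasDerivAt_update x i (x i)) j
  simpa [Pi.single_apply] using h

lemma hasDerivAt_prod_mul_regWeight {N : ℕ} {β a ε : ℝ} (hε : 0 < ε) {A : Finset (Fin N)}
    {i : Fin N} (hi : i ∉ A) {x : Fin N → ℝ} (hx : ∀ j, 0 < x j) :
    HasDerivAt (fun t => (∏ j ∈ insert i A, Function.update x i t j) *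
        regWeight N β a ε (Function.update x i t))
      ((a + 1) * ((∏ j ∈ A, x j) * regWeight N β a ε x) -
        (∏ j ∈ insert i A, x j) * regWeight N β a ε x +
        β * ∑ k, crossTerm β a ε A i k x) (x i) := by
  have hu := hasDerivAt_update_apply x i
  have hupd : Function.update x i (x i) = x := Function.update_eq_self i x
  have h1 : HasDerivAt (fun t => ∏ j ∈ insert i A, Function.update x i t j)
      ((∏ j ∈ insert i A, Function.update x i (x i) j) *
        ∑ j ∈ insert i A, (if j = i then (x i)⁻¹ else 0)) (x i) := by
    refine hasDerivAt_finset_prod_of_logDeriv _ fun j _ => (hu j).congr_deriv ?_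
    rw [hupd]
    split_ifs with h
    · rw [h, mul_inv_cancel₀ (hx i).ne']
    · rw [mul_zero]
  have h2 : HasDerivAt
      (fun t => ∏ j, Function.update x i t j ^ a * Real.exp (-Function.update x i t j))
      ((∏ j, Function.update x i (x i) j ^ a * Real.exp (-Function.update x i (x i) j)) *
        ∑ j, (if j = i then a / x i - 1 else 0)) (x i) := by
    refine hasDerivAt_finset_prod_of_logDeriv _ fun j _ => ?_
    have hpos : Function.update x i (x i) j ≠ 0 := by
      rw [hupd]; exact (hx j).ne'
    refine (((hu j).rpow_const (p := a) (Or.inl hpos)).mul (hu j).neg.exp).congr_deriv ?_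
    simp only [hupd]
    split_ifs with h
    · subst h
      simp only [Pi.neg_apply, hupd]
      rw [Real.rpow_sub_one (hx j).ne']
      ring
    · simp
  have h3 : HasDerivAt (fun t => regInteraction N β ε (Function.update x i t))
      (regInteraction N β ε (Function.update x i (x i)) *
        ∑ p ∈ (Finset.univ : Finset (Fin N)).offDiag,
          β / 4 * (2 * (x p.1 - x p.2) *
            ((if p.1 = i then 1 else 0) - if p.2 = i then 1 else 0)) /
            ((x p.1 - x p.2) ^ 2 + ε)) (x i) := by
    refine hasDerivAt_finset_prod_of_logDeriv _ fun p _ => ?_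
    have hpos : (Function.update x i (x i) p.1 - Function.update x i (x i) p.2) ^ 2 + ε ≠ 0 := by
      positivity
    refine (((((hu p.1).sub (hu p.2)).pow 2).add_const ε).rpow_const (p := β / 4)
      (Or.inl hpos)).congr_deriv ?_
    simp only [Pi.sub_apply, Pi.pow_apply, hupd] at hpos ⊢
    rw [Real.rpow_sub_one hpos]
    push_cast
    ring
  refine (h1.mul (h2.mul h3)).congr_deriv ?_
  rw [sum_offDiag_logDeriv]
  simp only [Pi.mul_apply, hupd, Finset.sum_ite_eq', Finset.mem_univ, Finset.mem_insert_self,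
    if_true, crossTerm, Finset.prod_insert hi, regWeight, ← Finset.sum_mul, ← Finset.mul_sum]
  have hne := (hx i).ne'
  generalize ∑ k, (x i - x k) / ((x i - x k) ^ 2 + ε) = s
  field_simp
  ring

lemma tendsto_prod_mul_regWeight_zero {N : ℕ} {β a ε : ℝ} (hβ : 0 < β) (ha : -1 < a)
    {A : Finset (Fin N)} {i : Fin N} (hi : i ∉ A) (x : Fin N → ℝ) :
    Filter.Tendsto (fun t => (∏ j ∈ insert i A, Function.update x i t j) *
        regWeight N β a ε (Function.update x i t)) (nhdsWithin 0 (Set.Ioi 0)) (nhds 0) := by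
  have hcont : Continuous fun t : ℝ => t ^ (a + 1) * (Real.exp (-t) * ((∏ j ∈ A, x j) *
      (∏ j ∈ Finset.univ.erase i, x j ^ a * Real.exp (-x j)) *
      regInteraction N β ε (Function.update x i t))) := by
    refine (continuous_id.rpow_const fun _ => Or.inr (by linarith)).mul
      ((Real.continuous_exp.comp continuous_neg).mul (continuous_const.mul ?_))
    refine continuous_finsetProd _ fun p _ => ?_
    have hu : Continuous fun t => Function.update x i t := continuous_const.update i continuous_id
    refine Continuous.rpow_const ?_ fun _ => Or.inr (by positivity)
    fun_prop
  have h := (hcont.tendsto 0).mono_left (nhdsWithin_le_nhds (s := Set.Ioi (0 : ℝ)))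
  rw [Real.zero_rpow (by linarith), zero_mul] at h
  refine h.congr' ?_
  filter_upwards [self_mem_nhdsWithin] with t ht
  have ht : 0 < t := ht
  have e1 : ∏ j ∈ A, Function.update x i t j = ∏ j ∈ A, x j :=
    Finset.prod_congr rfl fun j hj => Function.update_of_ne (ne_of_mem_of_not_mem hj hi) _ _
  have e2 : ∏ j ∈ Finset.univ.erase i,
        Function.update x i t j ^ a * Real.exp (-Function.update x i t j) =
      ∏ j ∈ Finset.univ.erase i, x j ^ a * Real.exp (-x j) :=
    Finset.prod_congr rfl fun j hj => by rw [Function.update_of_ne (Finset.ne_of_mem_erase hj)]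
  rw [regWeight, Finset.prod_insert hi, e1, ← Finset.mul_prod_erase _ _ (Finset.mem_univ i), e2,
    Function.update_self, Real.rpow_add_one ht.ne']
  ring

lemma integral_prod_insert_mul_regWeight {N : ℕ} {β a : ℝ} (hβ : 0 < β) (ha : -1 < a)
    {A : Finset (Fin N)} {i : Fin N} (hi : i ∉ A) :
    ∫ x, (∏ j ∈ insert i A, x j) * regWeight N β a 0 x ∂orthantMeasure N =
      (a + 1 + ((N : ℝ) - (A.card + 1)) * β / 2) *
        ∫ x, (∏ j ∈ A, x j) * regWeight N β a 0 x ∂orthantMeasure N := by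
  have hident : ∀ ε : ℝ, 0 < ε → ε ≤ 1 →
      (a + 1) * (∫ x, (∏ j ∈ A, x j) * regWeight N β a ε x ∂orthantMeasure N) -
        (∫ x, (∏ j ∈ insert i A, x j) * regWeight N β a ε x ∂orthantMeasure N) +
        β * ∑ k ∈ (insert i A)ᶜ, (∫ x, (∏ j ∈ A, x j) * regWeight N β a ε x *
          ((x i - x k) ^ 2 / ((x i - x k) ^ 2 + ε)) ∂orthantMeasure N) / 2 = 0 := by
    intro ε hε hε1
    have hA := integrable_prod_mul_regWeight hβ ha hε.le hε1 A
    have hS := integrable_prod_mul_regWeight hβ ha hε.le hε1 (insert i A)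
    have hG := fun k => integrable_crossTerm hβ ha hε hε1 A i k
    have hsum : Integrable (fun x => ∑ k, crossTerm β a ε A i k x) (orthantMeasure N) :=
      integrable_finsetSum _ fun k _ => hG k
    have hzero : ∫ x, ((a + 1) * ((∏ j ∈ A, x j) * regWeight N β a ε x) -
        (∏ j ∈ insert i A, x j) * regWeight N β a ε x +
        β * ∑ k, crossTerm β a ε A i k x) ∂orthantMeasure N = 0 := by
      obtain ⟨n, rfl⟩ : ∃ n, N = n + 1 :=
        Nat.exists_eq_succ_of_ne_zero (by rintro rfl; exact i.elim0)
      exact integral_orthant_partial_deriv_eq_zero i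
        (f := fun x => (∏ j ∈ insert i A, x j) * regWeight (n + 1) β a ε x)
        (fun x hx => hasDerivAt_prod_mul_regWeight hε hi hx) hS
        (((hA.const_mul _).sub hS).add (hsum.const_mul _))
        fun x _ => tendsto_prod_mul_regWeight_zero hβ ha hi x
    rw [integral_add (f := fun x => (a + 1) * ((∏ j ∈ A, x j) * regWeight N β a ε x) -
        (∏ j ∈ insert i A, x j) * regWeight N β a ε x) ((hA.const_mul _).sub hS) (hsum.const_mul _),
      integral_sub (hA.const_mul _) hS, integral_const_mul, integral_const_mul,
      integral_finsetSum _ fun k _ => hG k, ← Finset.sum_add_sum_compl (insert i A),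
      Finset.sum_eq_zero fun k hk => integral_crossTerm_of_mem β a ε hi hk, zero_add,
      Finset.sum_congr rfl fun k hk =>
        integral_crossTerm_of_notMem hβ ha hε hε1 hi (Finset.mem_compl.1 hk)] at hzero
    exact hzero
  have hone : ∀ B : Finset (Fin N), Filter.Tendsto
      (fun ε => ∫ x, (∏ j ∈ B, x j) * regWeight N β a ε x ∂orthantMeasure N)
      (nhdsWithin 0 (Set.Ioi 0))
      (nhds (∫ x, (∏ j ∈ B, x j) * regWeight N β a 0 x ∂orthantMeasure N)) := fun B => by
    have := tendsto_integral_prod_mul_regWeight_mul hβ ha B (q := fun _ _ => 1)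
      (fun _ => measurable_const) (by simp) fun x => by
        simpa using ((continuous_regWeight_eps hβ a x).tendsto 0).mono_left nhdsWithin_le_nhds
    simpa using this
  have hratio : ∀ k ∈ (insert i A)ᶜ, Filter.Tendsto
      (fun ε => (∫ x, (∏ j ∈ A, x j) * regWeight N β a ε x *
          ((x i - x k) ^ 2 / ((x i - x k) ^ 2 + ε)) ∂orthantMeasure N) / 2)
      (nhdsWithin 0 (Set.Ioi 0))
      (nhds ((∫ x, (∏ j ∈ A, x j) * regWeight N β a 0 x ∂orthantMeasure N) / 2)) := by
    intro k hk
    have hik : i ≠ k := by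
      rintro rfl
      simp at hk
    refine (tendsto_integral_prod_mul_regWeight_mul hβ ha A
      (q := fun ε x => (x i - x k) ^ 2 / ((x i - x k) ^ 2 + ε)) (fun ε => by fun_prop)
      (fun ε hε x => ?_) fun x => tendsto_regWeight_mul_ratio hβ a hik x).div_const 2
    rw [abs_of_nonneg (by positivity)]
    exact div_le_one_of_le₀ (by linarith) (by positivity)
  have hlim := (((hone A).const_mul (a + 1)).sub (hone (insert i A))).add
    ((tendsto_finsetSum _ hratio).const_mul β)
  have hlim0 := hlim.congr' (f₂ := fun _ => (0 : ℝ)) (by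
    filter_upwards [Ioc_mem_nhdsGT (zero_lt_one' ℝ)] with ε hε
    exact hident ε hε.1 hε.2)
  have heq := tendsto_nhds_unique hlim0 tendsto_const_nhds
  have hle : A.card + 1 ≤ N := by
    simpa [Finset.card_insert_of_notMem hi] using Finset.card_le_univ (insert i A)
  rw [Finset.sum_const, Finset.card_compl, Fintype.card_fin, Finset.card_insert_of_notMem hi,
    nsmul_eq_mul, Nat.cast_sub hle] at heq
  push_cast at heq
  linear_combination -heq

lemma integral_prod_mul_regWeight {N : ℕ} {β a : ℝ} (hβ : 0 < β) (ha : -1 < a)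
    (S : Finset (Fin N)) :
    ∫ x, (∏ j ∈ S, x j) * regWeight N β a 0 x ∂orthantMeasure N =
      (∏ j ∈ Finset.range S.card, (a + 1 + ((N : ℝ) - (j + 1)) * β / 2)) *
        ∫ x, regWeight N β a 0 x ∂orthantMeasure N := by
  induction S using Finset.induction_on with
  | empty => simp
  | insert i A hi ih =>
    rw [integral_prod_insert_mul_regWeight hβ ha hi, ih, Finset.card_insert_of_notMem hi,
      Finset.prod_range_succ]
    ring

lemma integral_regWeight_pos (N : ℕ) {β a : ℝ} (hβ : 0 < β) (ha : -1 < a) :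
    0 < ∫ x, regWeight N β a 0 x ∂orthantMeasure N := by
  have hint : Integrable (regWeight N β a 0) (orthantMeasure N) := by
    simpa using integrable_prod_mul_regWeight hβ ha le_rfl zero_le_one (∅ : Finset (Fin N))
  have hnonneg : 0 ≤ᵐ[orthantMeasure N] regWeight N β a 0 := by
    filter_upwards [ae_orthant_pos N] with x hx using regWeight_nonneg le_rfl hx
  rw [← restrict_orthant_eq] at hint hnonneg ⊢
  rw [setIntegral_pos_iff_support_of_nonneg_ae hnonneg hint]
  let U : Set (Fin N → ℝ) := Set.univ.pi fun i => Set.Ioo (i : ℝ) (i + 1)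
  have hU : 0 < (volume : Measure (Fin N → ℝ)) U :=
    (isOpen_set_pi Set.finite_univ fun _ _ => isOpen_Ioo).measure_pos _
      (Set.univ_pi_nonempty_iff.2 fun i => Set.nonempty_Ioo.2 (lt_add_one _))
  refine hU.trans_le (measure_mono fun x hx => ?_)
  have hx' : ∀ i : Fin N, (i : ℝ) < x i ∧ x i < i + 1 := fun i => hx i trivial
  have hpos : ∀ i, 0 < x i := fun i => (Nat.cast_nonneg _).trans_lt (hx' i).1
  have hlt : ∀ i j : Fin N, i < j → x i < x j := fun i j hij => by
    have : ((i : ℕ) : ℝ) + 1 ≤ (j : ℕ) := by exact_mod_cast hij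
    linarith [(hx' i).2, (hx' j).1]
  refine ⟨ne_of_gt ?_, fun i _ => hpos i⟩
  refine mul_pos (Finset.prod_pos fun i _ =>
    mul_pos (Real.rpow_pos_of_pos (hpos i) _) (Real.exp_pos _)) (Finset.prod_pos fun p hp => ?_)
  refine Real.rpow_pos_of_pos ?_ _
  have hne : x p.1 - x p.2 ≠ 0 := by
    rcases lt_or_gt_of_ne (Finset.mem_offDiag.1 hp).2.2 with h | h
    · exact (sub_neg.2 (hlt _ _ h)).ne
    · exact (sub_pos.2 (hlt _ _ h)).ne'
  positivity

/-- The Laguerre `β`-ensemble average of the `l`-th elementary symmetric polynomial: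
`⟨e_l⟩ = C(N,l) ∏_{j=1}^{l} (a + 1 + (N-j)β/2)`. -/
theorem laguerre_beta_ensemble_average_esym (β : ℝ) (hβ : 0 < β) (N : ℕ) (hN : 0 < N)
    (a : ℝ) (ha : -1 < a) (l : ℕ) (hl : l ≤ N) :
    (∫ x in Set.univ.pi (fun _ : Fin N => Set.Ioi (0 : ℝ)),
        esym N l x * ((∏ i, x i ^ a * Real.exp (-x i)) * interaction N β x)) /
      (∫ x in Set.univ.pi (fun _ : Fin N => Set.Ioi (0 : ℝ)),
        (∏ i, x i ^ a * Real.exp (-x i)) * interaction N β x)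
      = (N.choose l : ℝ) *
          ∏ j ∈ Finset.range l, (a + 1 + ((N : ℝ) - (j + 1)) * β / 2) := by
  have hweight : ∀ x : Fin N → ℝ,
      (∏ i, x i ^ a * Real.exp (-x i)) * interaction N β x = regWeight N β a 0 x := fun x => by
    rw [regWeight, regInteraction_zero]
  simp only [restrict_orthant_eq, hweight, esym, Finset.sum_mul]
  rw [div_eq_iff (integral_regWeight_pos N hβ ha).ne', integral_finsetSum _ fun S _ =>
      integrable_prod_mul_regWeight hβ ha le_rfl zero_le_one S,
    Finset.sum_congr rfl fun S hS => by
      rw [integral_prod_mul_regWeight hβ ha S, (Finset.mem_powersetCard.1 hS).2],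
    Finset.sum_const, Finset.card_powersetCard, Finset.card_univ, Fintype.card_fin, nsmul_eq_mul,
    mul_assoc]
end
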